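/- arXiv:1506.02367 — 5 statements merged into one kernel-verified Lean document; each statement's English description precedes it below -/
import Mathlib

section
/- Let L n denote the number of lambda terms of size n. Then L 0 = 0, L 1 = 1, L 2 = 2, L 3 = 4, and for every n ≥ 4 the linear holonomic recurrence (n+1)·L n = (4n−1)·L (n−1) − (2n−1)·L (n−2) − L (n−3) − (n−4)·L (n−4) holds (as an identity of integers). -/
/-- Lambda terms with de Bruijn indices. -/
inductive Term : Type
  | var : ℕ → Term
  | app : Term → Term → Term
  | abs : Term → Term

namespace Term

/-- Natural size: every operator (zero, successor, application, abstraction) has size 1. -/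
def size : Term → ℕ
  | var k => k + 1
  | app M N => M.size + N.size + 1
  | abs M => M.size + 1

end Term

/-- `L n` is the number of lambda terms of size `n`. -/
noncomputable def L (n : ℕ) : ℕ := Nat.card {t : Term // t.size = n}


namespace Term

/-- Decomposition of terms of size `n + 1` by their head constructor. -/
def decomp (n : ℕ) : {t : Term // t.size = n + 1} ≃
    (Unit ⊕ {t : Term // t.size = n}) ⊕
      (Σ p : Finset.HasAntidiagonal.antidiagonal n,
        {t : Term // t.size = p.1.1} × {t : Term // t.size = p.1.2}) where
  toFun
    | ⟨var _, _⟩ => Sum.inl (Sum.inl ())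
    | ⟨abs M, h⟩ => Sum.inl (Sum.inr ⟨M, by simpa [size] using h⟩)
    | ⟨app M N, h⟩ => Sum.inr ⟨⟨(M.size, N.size), by
        simpa [size] using h⟩, ⟨M, rfl⟩, ⟨N, rfl⟩⟩
  invFun
    | Sum.inl (Sum.inl _) => ⟨var n, rfl⟩
    | Sum.inl (Sum.inr ⟨M, h⟩) => ⟨abs M, by simp [size, h]⟩
    | Sum.inr ⟨⟨p, hp⟩, ⟨M, hM⟩, ⟨N, hN⟩⟩ => ⟨app M N, by
        have := Finset.HasAntidiagonal.mem_antidiagonal.1 hp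
        dsimp only at hM hN; simp only [size]; omega⟩
  left_inv := by
    rintro ⟨t, h⟩
    cases t with
    | var k =>
      have : k = n := by simpa [size] using h
      subst this; rfl
    | abs M => rfl
    | app M N => rfl
  right_inv := by
    rintro ((_ | ⟨M, h⟩) | ⟨⟨⟨a, b⟩, hp⟩, ⟨M, hM⟩, ⟨N, hN⟩⟩)
    · rfl
    · rfl
    · dsimp only at hM hN
      subst hM hN
      rfl

theorem size_pos (t : Term) : 0 < t.size := by
  cases t <;> simp [size]

instance isEmpty_zero : IsEmpty {t : Term // t.size = 0} :=
  ⟨fun t => by have := size_pos t.1; have := t.2; omega⟩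

theorem finite_size (n : ℕ) : Finite {t : Term // t.size = n} := by
  induction n using Nat.strong_induction_on with
  | _ n ih =>
    cases n with
    | zero => infer_instance
    | succ n =>
      have h0 := ih n (by omega)
      have : ∀ p : Finset.HasAntidiagonal.antidiagonal n,
          Finite ({t : Term // t.size = p.1.1} × {t : Term // t.size = p.1.2}) := by
        rintro ⟨p, hp⟩
        have := Finset.HasAntidiagonal.mem_antidiagonal.1 hp
        have h1 := ih p.1 (by omega)
        have h2 := ih p.2 (by omega)
        infer_instance
      exact Finite.of_equiv _ (decomp n).symm

end Term

theorem L_zero : L 0 = 0 := by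
  unfold L; exact Nat.card_of_isEmpty

theorem L_succ (n : ℕ) :
    L (n + 1) = 1 + L n + ∑ p ∈ Finset.HasAntidiagonal.antidiagonal n, L p.1 * L p.2 := by
  have := Term.finite_size
  unfold L
  rw [Nat.card_congr (Term.decomp n), Nat.card_sum, Nat.card_sum, Nat.card_sigma]
  simp only [Nat.card_prod, Nat.card_unique]
  rw [← Finset.sum_coe_sort (Finset.HasAntidiagonal.antidiagonal n)]

open PowerSeries in
theorem series_eq (F : PowerSeries ℤ) (hF : F = PowerSeries.mk fun n => (L n : ℤ)) :
    X * (1 - X) * F ^ 2 - (1 - X) ^ 2 * F + X = 0 := by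
  have key : F = X * (PowerSeries.mk 1 + F + F * F) := by
    ext n
    cases n with
    | zero => simp [hF, L_zero]
    | succ n =>
      rw [coeff_succ_X_mul, map_add, map_add, coeff_mul, hF]
      simp only [coeff_mk]
      rw [L_succ]
      push_cast
      rfl
  have h1 : (PowerSeries.mk 1 : PowerSeries ℤ) * (1 - X) = 1 :=
    PowerSeries.mk_one_mul_one_sub_eq_one ℤ
  linear_combination (-(1 - X)) * key - X * h1

open PowerSeries in
theorem series_ode (F D : PowerSeries ℤ) (hD : D = derivative ℤ F)
    (E : X * (1 - X) * F ^ 2 - (1 - X) ^ 2 * F + X = 0) :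
    4 * (X * D - 4 * (X ^ 2 * D) + 2 * (X ^ 3 * D) + X ^ 5 * D
      + F - 3 * (X * F) + 3 * (X ^ 2 * F) + X ^ 3 * F) = 4 * (2 * X - X ^ 2 - X ^ 3) := by
  have Ed := congrArg (derivative ℤ) E
  simp only [map_add, map_sub, map_zero, Derivation.leibniz, Derivation.leibniz_pow,
    derivative_X, Derivation.map_one_eq_zero, ← hD, smul_eq_mul, nsmul_eq_mul] at Ed
  push_cast at Ed
  linear_combination (4 * (2 * X * F - (1 - X)) - 8 * X * (1 - X) * (2 * F + 2 * X * D + 1)) * E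
    + (2 * X * F - (1 - X)) * (1 - X) * 4 * X * Ed

open PowerSeries in
theorem L_rec (m : ℕ) :
    ((m : ℤ) + 5) * L (m + 4) =
      (4 * (m : ℤ) + 15) * L (m + 3) - (2 * (m : ℤ) + 7) * L (m + 2) - L (m + 1) - m * L m := by
  have E := series_ode _ _ rfl (series_eq _ rfl)
  have h := congrArg (coeff (m + 4)) E
  have c4 : (4 : PowerSeries ℤ) = C 4 := rfl
  have c3 : (3 : PowerSeries ℤ) = C 3 := rfl
  have c2 : (2 : PowerSeries ℤ) = C 2 := rfl
  rw [c4, c3, c2] at h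
  simp only [map_add, map_sub, coeff_C_mul, coeff_X_pow_mul', coeff_X_pow, coeff_X,
    coeff_succ_X_mul, coeff_derivative, coeff_mk] at h
  rcases m with _ | m
  · norm_num at h ⊢
    linarith
  · have e1 : m + 1 + 4 - 2 = m + 3 := by omega
    have e2 : m + 1 + 4 - 3 = m + 2 := by omega
    have e3 : m + 1 + 4 - 5 = m := by omega
    simp [e1, e2, e3] at h
    push_cast at h ⊢
    ring_nf at h ⊢
    linarith



theorem L_holonomic_recurrence :
    L 0 = 0 ∧ L 1 = 1 ∧ L 2 = 2 ∧ L 3 = 4 ∧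
    ∀ n : ℕ, 4 ≤ n →
      ((n : ℤ) + 1) * L n =
        (4 * (n : ℤ) - 1) * L (n - 1) - (2 * (n : ℤ) - 1) * L (n - 2)
          - L (n - 3) - ((n : ℤ) - 4) * L (n - 4) := by
  have h1 : L 1 = 1 := by rw [L_succ]; simp [L_zero]
  have h2 : L 2 = 2 := by rw [L_succ]; simp [Finset.Nat.antidiagonal_succ, L_zero, h1]
  have h3 : L 3 = 4 := by rw [L_succ]; simp [Finset.Nat.antidiagonal_succ, L_zero, h1, h2]
  refine ⟨L_zero, h1, h2, h3, fun n hn => ?_⟩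
  obtain ⟨m, rfl⟩ := Nat.exists_eq_add_of_le' hn
  have h := L_rec m
  have e1 : m + 4 - 1 = m + 3 := by omega
  have e2 : m + 4 - 2 = m + 2 := by omega
  have e3 : m + 4 - 3 = m + 1 := by omega
  have e4 : m + 4 - 4 = m := by omega
  rw [e1, e2, e3, e4]
  push_cast
  linear_combination h
end

section
/- Let L n denote the number of lambda terms of size n. Then the sequence n ↦ L n · ρ^n · n^{3/2} converges to C as n → ∞; that is, L n ∼ (1/ρ)^n · C / n^{3/2}. -/
def sizeSuccEquiv (n : ℕ) : {t : Term // t.size = n + 1} ≃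
    Unit ⊕ {t : Term // t.size = n} ⊕
      (Σ p : {p : ℕ × ℕ // p ∈ Finset.HasAntidiagonal.antidiagonal n},
        {t : Term // t.size = p.1.1} × {t : Term // t.size = p.1.2}) where
  toFun t := match t with
    | ⟨.var _, _⟩ => Sum.inl ()
    | ⟨.abs M, h⟩ => Sum.inr (Sum.inl ⟨M, by simpa [Term.size] using h⟩)
    | ⟨.app M N, h⟩ => Sum.inr (Sum.inr ⟨⟨(M.size, N.size), by
        simpa [Term.size] using h⟩, ⟨M, rfl⟩, ⟨N, rfl⟩⟩)
  invFun s := match s with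
    | Sum.inl _ => ⟨.var n, rfl⟩
    | Sum.inr (Sum.inl M) => ⟨.abs M.1, by simp [Term.size, M.2]⟩
    | Sum.inr (Sum.inr ⟨p, M, N⟩) => ⟨.app M.1 N.1, by
        have := p.2
        simp only [Finset.HasAntidiagonal.mem_antidiagonal] at this
        simp [Term.size, M.2, N.2, this]⟩
  left_inv t := by
    rcases t with ⟨_ | _ | _, h⟩
    · simp [Term.size] at h; simp [h]
    · rfl
    · rfl
  right_inv s := by
    rcases s with _ | M | ⟨⟨⟨i, j⟩, hp⟩, ⟨M, hM⟩, ⟨N, hN⟩⟩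
    · rfl
    · rfl
    · simp only at hM hN
      subst hM hN
      rfl

instance isEmpty_size_zero : IsEmpty {t : Term // t.size = 0} :=
  ⟨fun ⟨t, h⟩ => by cases t <;> simp [Term.size] at h⟩

theorem finite_size (n : ℕ) : Finite {t : Term // t.size = n} := by
  induction n using Nat.strong_induction_on with
  | _ n ih =>
    cases n with
    | zero => infer_instance
    | succ n =>
      have h1 := ih n (Nat.lt_succ_self n)
      have h2 : ∀ p : {p : ℕ × ℕ // p ∈ Finset.HasAntidiagonal.antidiagonal n},
          Finite ({t : Term // t.size = p.1.1} × {t : Term // t.size = p.1.2}) := by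
        rintro ⟨⟨i, j⟩, hp⟩
        simp only [Finset.HasAntidiagonal.mem_antidiagonal] at hp
        have := ih i (by omega)
        have := ih j (by omega)
        infer_instance
      exact Finite.of_equiv _ (sizeSuccEquiv n).symm

theorem stirling_centralBinom (n : ℕ) (hn : n ≠ 0) :
    (n.centralBinom : ℝ) * Real.sqrt n / 4 ^ n =
      Stirling.stirlingSeq (2 * n) / Stirling.stirlingSeq n ^ 2 := by
  have hn' : (0 : ℝ) < n := by positivity
  have h1 : (n.centralBinom : ℝ) = (2 * n).factorial / (n.factorial : ℝ) ^ 2 := by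
    rw [Nat.centralBinom, Nat.cast_choose ℝ (by omega : n ≤ 2 * n)]
    rw [show 2 * n - n = n by omega, sq]
  unfold Stirling.stirlingSeq
  rw [h1]
  have hs : Real.sqrt (2 * ((2 * n : ℕ) : ℝ)) = 2 * Real.sqrt n := by
    push_cast
    rw [show (2 * (2 * (n : ℝ))) = 2 ^ 2 * n by ring, Real.sqrt_mul (by positivity),
      Real.sqrt_sq (by norm_num)]
  have hs2 : Real.sqrt (2 * (n : ℝ)) ^ 2 = 2 * n := Real.sq_sqrt (by positivity)
  have hs3 : Real.sqrt (n : ℝ) * Real.sqrt n = n := Real.mul_self_sqrt hn'.le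
  rw [hs, div_pow (n.factorial : ℝ), mul_pow (Real.sqrt _), hs2]
  have hf : (0 : ℝ) < n.factorial := by positivity
  have hsp : 0 < Real.sqrt (n : ℝ) := Real.sqrt_pos.2 hn'
  have he := Real.exp_pos 1
  have h4 : (((2 * n : ℕ) : ℝ) / Real.exp 1) ^ (2 * n)
      = 4 ^ n * (((n : ℝ) / Real.exp 1) ^ n) ^ 2 := by
    push_cast
    rw [mul_div_assoc, mul_pow, pow_mul, ← pow_mul _ n 2, mul_comm n 2]
    norm_num
  rw [h4]
  have hE : 0 < ((n : ℝ) / Real.exp 1) ^ n := by positivity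
  generalize ((n : ℝ) / Real.exp 1) ^ n = E at *
  field_simp
  nlinarith [hs3]

theorem tendsto_centralBinom :
    Filter.Tendsto (fun n : ℕ => (n.centralBinom : ℝ) * Real.sqrt n / 4 ^ n)
      Filter.atTop (nhds (1 / Real.sqrt Real.pi)) := by
  have hp : 0 < Real.sqrt Real.pi := Real.sqrt_pos.2 Real.pi_pos
  have h := Stirling.tendsto_stirlingSeq_sqrt_pi
  have h2 : Filter.Tendsto (fun n : ℕ => 2 * n) Filter.atTop Filter.atTop :=
    Filter.tendsto_id.const_mul_atTop' (by norm_num)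
  have h3 := (h.comp h2).div (h.pow 2) (by positivity)
  rw [show Real.sqrt Real.pi / Real.sqrt Real.pi ^ 2 = 1 / Real.sqrt Real.pi by
    field_simp] at h3
  refine h3.congr' ?_
  filter_upwards [Filter.eventually_ne_atTop 0] with n hn
  simpa using (stirling_centralBinom n hn).symm

/-- Coefficients of the square root of `1 - w`. -/
noncomputable def sqc : ℕ → ℝ
  | 0 => 1
  | n + 1 => -(1 / 2) * (catalan n / 4 ^ n)

theorem sqc_abs_le (n : ℕ) : |sqc n| ≤ 1 := by
  cases n with
  | zero => simp [sqc]
  | succ n =>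
    have h1 : catalan n ≤ 4 ^ n := by
      have := succ_mul_catalan_eq_centralBinom n
      have := Nat.centralBinom_le_four_pow n
      nlinarith [Nat.zero_le (n * catalan n)]
    have h2 : (catalan n : ℝ) ≤ 4 ^ n := by exact_mod_cast h1
    have h3 : (catalan n : ℝ) / 4 ^ n ≤ 1 := by
      rw [div_le_one (by positivity)]; exact h2
    have h4 : (0 : ℝ) ≤ (catalan n : ℝ) / 4 ^ n := by positivity
    simp only [sqc]
    rw [abs_le]; constructor <;> linarith

theorem tendsto_sqc :
    Filter.Tendsto (fun n : ℕ => sqc n * (n : ℝ) ^ ((3 : ℝ) / 2))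
      Filter.atTop (nhds (-(1 / (2 * Real.sqrt Real.pi)))) := by
  rw [← Filter.tendsto_add_atTop_iff_nat 1]
  have h1 : Filter.Tendsto (fun n : ℕ => Real.sqrt (1 + 1 / (n : ℝ))) Filter.atTop (nhds 1) := by
    have h := (tendsto_one_div_atTop_nhds_zero_nat (𝕜 := ℝ)).const_add 1
    have := h.sqrt
    simpa using this
  have h2 := (tendsto_centralBinom.mul h1).const_mul (-(1 / 2))
  rw [show -(1 / 2) * (1 / Real.sqrt Real.pi * 1) = (-(1 / (2 * Real.sqrt Real.pi))) by
    have hp : 0 < Real.sqrt Real.pi := Real.sqrt_pos.2 Real.pi_pos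
    field_simp] at h2
  refine h2.congr' ?_
  filter_upwards [Filter.eventually_ne_atTop 0] with n hn
  have hn' : (0 : ℝ) < n := by positivity
  have hc : (n.centralBinom : ℝ) = (n + 1) * catalan n := by
    rw [← succ_mul_catalan_eq_centralBinom n]; push_cast; ring
  have h5 : Real.sqrt n * Real.sqrt (1 + 1 / (n : ℝ)) = Real.sqrt (n + 1) := by
    rw [← Real.sqrt_mul hn'.le]; congr 1; field_simp
  have h6 : ((n + 1 : ℕ) : ℝ) ^ ((3 : ℝ) / 2) = (n + 1) * Real.sqrt (n + 1) := by
    rw [show (3 : ℝ) / 2 = 1 + 1 / 2 by norm_num, Real.rpow_add (by positivity),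
      Real.rpow_one, ← Real.sqrt_eq_rpow]
    push_cast; ring
  rw [h6, hc, ← h5]
  simp only [sqc]
  ring

theorem sqc_bound : ∃ M : ℝ, 0 ≤ M ∧ ∀ n : ℕ, |sqc n| * ((n : ℝ) ) ^ ((3 : ℝ) / 2) ≤ M := by
  obtain ⟨M, hM⟩ := tendsto_sqc.abs.bddAbove_range
  refine ⟨M, ?_, fun n => ?_⟩
  · exact (abs_nonneg _).trans (hM ⟨0, rfl⟩)
  · have := hM ⟨n, rfl⟩
    simp only [abs_mul] at this
    rwa [abs_of_nonneg (by positivity : (0 : ℝ) ≤ (n : ℝ) ^ ((3 : ℝ) / 2))] at this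
theorem sq_le_two_pow (j : ℕ) : ((j : ℝ) + 1) ^ 2 ≤ 4 * 2 ^ j := by
  induction j with
  | zero => norm_num
  | succ j ih =>
    rcases Nat.eq_zero_or_pos j with h | h
    · subst h; norm_num
    · rcases Nat.lt_or_ge j 2 with h2 | h2
      · have : j = 1 := by omega
        subst this; norm_num
      have : (2 : ℝ) ≤ j := by exact_mod_cast h2
      rw [pow_succ (2 : ℝ)]; push_cast
      nlinarith

theorem tendsto_ratio (j : ℕ) : Filter.Tendsto
    (fun m : ℕ => (((m + j : ℕ) : ℝ) / m) ^ ((3 : ℝ) / 2)) Filter.atTop (nhds 1) := by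
  have h : Filter.Tendsto (fun m : ℕ => 1 + (j : ℝ) / m) Filter.atTop (nhds (1 + 0)) :=
    (tendsto_const_div_atTop_nhds_zero_nat (j : ℝ)).const_add 1
  rw [add_zero] at h
  have h2 := h.rpow_const (p := (3 : ℝ) / 2) (Or.inl one_ne_zero)
  rw [Real.one_rpow] at h2
  refine h2.congr' ?_
  filter_upwards [Filter.eventually_ne_atTop 0] with m hm
  congr 1
  have : (m : ℝ) ≠ 0 := by exact_mod_cast hm
  push_cast
  field_simp

theorem tendsto_sqc_shift (j : ℕ) :
    Filter.Tendsto (fun n : ℕ => sqc (n - j) * (n : ℝ) ^ ((3 : ℝ) / 2))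
      Filter.atTop (nhds (-(1 / (2 * Real.sqrt Real.pi)))) := by
  rw [← Filter.tendsto_add_atTop_iff_nat j]
  have h := tendsto_sqc.mul (tendsto_ratio j)
  rw [mul_one] at h
  refine h.congr' ?_
  filter_upwards [Filter.eventually_ne_atTop 0] with m hm
  have : (m : ℝ) ≠ 0 := by exact_mod_cast hm
  rw [Nat.add_sub_cancel, mul_assoc, ← Real.mul_rpow (by positivity) (by positivity)]
  congr 2
  field_simp

theorem sqc_conv_bound : ∃ M : ℝ, 0 ≤ M ∧ ∀ k j : ℕ,
    |sqc k| * (((k + j : ℕ) : ℝ)) ^ ((3 : ℝ) / 2) ≤ M * 2 ^ j := by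
  obtain ⟨M, hM0, hM⟩ := sqc_bound
  refine ⟨4 * (M + 1), by positivity, fun k j => ?_⟩
  have hj : ((j : ℝ) + 1) ^ ((3 : ℝ) / 2) ≤ 4 * 2 ^ j := by
    refine le_trans ?_ (sq_le_two_pow j)
    rw [← Real.rpow_natCast]
    exact Real.rpow_le_rpow_of_exponent_le (by linarith [(Nat.cast_nonneg j : (0 : ℝ) ≤ j)])
      (by norm_num)
  have hj0 : (0 : ℝ) ≤ ((j : ℝ) + 1) ^ ((3 : ℝ) / 2) := by positivity
  have key : |sqc k| * (((k + j : ℕ) : ℝ)) ^ ((3 : ℝ) / 2)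
      ≤ (M + 1) * ((j : ℝ) + 1) ^ ((3 : ℝ) / 2) := by
    rcases Nat.eq_zero_or_pos k with h | h
    · subst h
      have h1 : ((0 + j : ℕ) : ℝ) ^ ((3 : ℝ) / 2) ≤ ((j : ℝ) + 1) ^ ((3 : ℝ) / 2) := by
        apply Real.rpow_le_rpow (by positivity) _ (by norm_num)
        push_cast; linarith
      simp only [sqc, abs_one, one_mul]
      nlinarith
    · have hk : (1 : ℝ) ≤ k := by exact_mod_cast h
      have h1 : ((k + j : ℕ) : ℝ) ^ ((3 : ℝ) / 2)
          ≤ (k : ℝ) ^ ((3 : ℝ) / 2) * ((j : ℝ) + 1) ^ ((3 : ℝ) / 2) := by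
        rw [← Real.mul_rpow (by positivity) (by positivity)]
        apply Real.rpow_le_rpow (by positivity) _ (by norm_num)
        push_cast
        nlinarith [(Nat.cast_nonneg j : (0 : ℝ) ≤ j)]
      calc _ ≤ |sqc k| * ((k : ℝ) ^ ((3 : ℝ) / 2) * ((j : ℝ) + 1) ^ ((3 : ℝ) / 2)) := by gcongr
        _ = (|sqc k| * (k : ℝ) ^ ((3 : ℝ) / 2)) * ((j : ℝ) + 1) ^ ((3 : ℝ) / 2) := by ring
        _ ≤ (M + 1) * ((j : ℝ) + 1) ^ ((3 : ℝ) / 2) := by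
          gcongr
          linarith [hM k]
  calc _ ≤ _ := key
    _ ≤ (M + 1) * (4 * 2 ^ j) := by gcongr
    _ = _ := by ring

theorem conv_lim (g : ℕ → ℂ) (hg : Summable fun n => ‖g n‖ * 2 ^ n) :
    Filter.Tendsto (fun n : ℕ =>
      (∑ p ∈ Finset.HasAntidiagonal.antidiagonal n, (sqc p.1 : ℂ) * g p.2)
        * (((n : ℝ) ^ ((3 : ℝ) / 2) : ℝ) : ℂ))
      Filter.atTop (nhds (((-(1 / (2 * Real.sqrt Real.pi)) : ℝ) : ℂ) * ∑' n, g n)) := by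
  obtain ⟨M, hM0, hM⟩ := sqc_conv_bound
  let f : ℕ → ℕ → ℂ := fun n j =>
    if j ≤ n then ((sqc (n - j) * (n : ℝ) ^ ((3 : ℝ) / 2) : ℝ) : ℂ) * g j else 0
  have h := tendsto_tsum_of_dominated_convergence (𝓕 := Filter.atTop) (f := f)
    (g := fun j => ((-(1 / (2 * Real.sqrt Real.pi)) : ℝ) : ℂ) * g j)
    (bound := fun j => M * (‖g j‖ * 2 ^ j)) (hg.mul_left M) ?_ ?_
  · rw [tsum_mul_left] at h
    refine h.congr fun n => ?_
    rw [tsum_eq_sum (s := Finset.range (n + 1))]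
    · rw [← Finset.Nat.sum_antidiagonal_swap, Finset.Nat.sum_antidiagonal_eq_sum_range_succ_mk,
        Finset.sum_mul]
      refine Finset.sum_congr rfl fun j hj => ?_
      have : j ≤ n := by simpa [Nat.lt_succ_iff] using hj
      simp only [f, this, if_true, Prod.swap]
      push_cast
      ring
    · intro j hj
      have : ¬ j ≤ n := by simpa [Nat.lt_succ_iff] using hj
      simp [f, this]
  · intro j
    have h1 := ((Complex.continuous_ofReal.tendsto _).comp (tendsto_sqc_shift j)).mul_const (g j)
    refine h1.congr' ?_
    filter_upwards [Filter.eventually_ge_atTop j] with n hn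
    simp [f, hn]
  · refine Filter.Eventually.of_forall fun n j => ?_
    by_cases hj : j ≤ n
    · simp only [f, hj, if_true, norm_mul, Complex.norm_real, Real.norm_eq_abs]
      have := hM (n - j) j
      rw [Nat.sub_add_cancel hj] at this
      rw [abs_of_nonneg (by positivity : (0 : ℝ) ≤ (n : ℝ) ^ ((3 : ℝ) / 2))]
      calc _ ≤ (M * 2 ^ j) * ‖g j‖ := by gcongr
        _ = _ := by ring
    · simp only [f, hj, if_false, norm_zero]
      positivity
open PowerSeries in
/-- The power series of the square root of `1 - w`. -/
noncomputable def SA : PowerSeries ℂ := PowerSeries.mk fun n => (sqc n : ℂ)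

open PowerSeries in
theorem SA_sq : SA * SA = 1 - X := by
  set cs : PowerSeries ℂ := rescale (1 / 4 : ℂ) (PowerSeries.map (Nat.castRingHom ℂ) catalanSeries)
    with hcs
  have h1 : cs * cs * (C (1 / 4 : ℂ) * X) + 1 = cs := by
    have h := congrArg (fun F => rescale (1 / 4 : ℂ) (PowerSeries.map (Nat.castRingHom ℂ) F))
      catalanSeries_sq_mul_X_add_one
    simp only [map_add, map_mul, map_pow, map_one, PowerSeries.map_X, rescale_X] at h
    rw [← hcs, sq] at h
    exact h
  have h2 : SA = 1 - C (1 / 2 : ℂ) * (X * cs) := by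
    ext n
    cases n with
    | zero => simp [SA, sqc]
    | succ n =>
      rw [map_sub, coeff_C_mul, coeff_succ_X_mul, hcs, coeff_rescale, coeff_map]
      simp [SA, sqc, coeff_one]
      ring
  have e1 : (C (1 / 2 : ℂ) : PowerSeries ℂ) * 2 = 1 := by
    rw [show (2 : PowerSeries ℂ) = C (2 : ℂ) from (map_ofNat (C : ℂ →+* PowerSeries ℂ) 2).symm, ← map_mul]; norm_num
  have e2 : (C (1 / 4 : ℂ) : PowerSeries ℂ) = C (1 / 2 : ℂ) * C (1 / 2 : ℂ) := by
    rw [← map_mul]; norm_num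
  rw [e2] at h1
  rw [h2]
  linear_combination X * h1 - (X * cs) * e1

/-- Weighted absolute summability of coefficients. -/
def Wt (F : PowerSeries ℂ) : Prop := Summable fun n => ‖PowerSeries.coeff n F‖ * 2 ^ n

theorem Wt.summable {F : PowerSeries ℂ} (h : Wt F) :
    Summable fun n => ‖PowerSeries.coeff n F‖ := by
  refine Summable.of_nonneg_of_le (fun _ => norm_nonneg _) (fun n => ?_) h
  exact le_mul_of_one_le_right (norm_nonneg _) (one_le_pow₀ (by norm_num))

theorem Wt.mul {F G : PowerSeries ℂ} (hF : Wt F) (hG : Wt G) : Wt (F * G) := by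
  have e : ∀ H : PowerSeries ℂ, ∀ n, ‖PowerSeries.coeff n H‖ * 2 ^ n
      = ‖PowerSeries.coeff n H * 2 ^ n‖ := by
    intro H n; rw [norm_mul, norm_pow]; norm_num
  unfold Wt at *
  simp only [e] at *
  refine (summable_norm_sum_mul_antidiagonal_of_summable_norm hF hG).congr fun n => ?_
  rw [PowerSeries.coeff_mul, Finset.sum_mul]
  congr 1
  refine Finset.sum_congr rfl fun p hp => ?_
  rw [← Finset.HasAntidiagonal.mem_antidiagonal.1 hp, pow_add]
  ring

theorem Wt.rescale {F : PowerSeries ℂ} (hF : ∀ n, ‖PowerSeries.coeff n F‖ ≤ 1) {b : ℂ}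
    (hb : 2 * ‖b‖ < 1) : Wt (PowerSeries.rescale b F) := by
  unfold Wt
  refine Summable.of_nonneg_of_le (fun _ => by positivity) (fun n => ?_)
    (summable_geometric_of_lt_one (by positivity) hb)
  rw [PowerSeries.coeff_rescale, norm_mul, norm_pow, mul_pow]
  calc _ ≤ ‖b‖ ^ n * 1 * 2 ^ n := by gcongr; exact hF n
    _ = _ := by ring

/-- Evaluation at `1`. -/
noncomputable def ev (F : PowerSeries ℂ) : ℂ := ∑' n, PowerSeries.coeff n F

theorem ev_mul {F G : PowerSeries ℂ} (hF : Wt F) (hG : Wt G) : ev (F * G) = ev F * ev G := by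
  unfold ev
  rw [tsum_mul_tsum_eq_tsum_sum_antidiagonal_of_summable_norm hF.summable hG.summable]
  simp only [PowerSeries.coeff_mul]

theorem coeff_lin (a : ℂ) (n : ℕ) (hn : 2 ≤ n) :
    PowerSeries.coeff n (1 - PowerSeries.C a * PowerSeries.X) = 0 := by
  obtain ⟨m, rfl⟩ := Nat.exists_eq_add_of_le hn
  simp [PowerSeries.coeff_one, PowerSeries.coeff_X]
  omega

theorem Wt_lin (a : ℂ) : Wt (1 - PowerSeries.C a * PowerSeries.X) := by
  unfold Wt
  refine summable_of_ne_finset_zero (s := Finset.range 2) fun n hn => ?_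
  rw [coeff_lin a n (by simpa [Nat.succ_le_iff] using hn)]
  simp

theorem ev_lin (a : ℂ) : ev (1 - PowerSeries.C a * PowerSeries.X) = 1 - a := by
  unfold ev
  rw [tsum_eq_sum (s := Finset.range 2) fun n hn => coeff_lin a n (by simpa [Nat.succ_le_iff] using hn)]
  simp [Finset.sum_range_succ, PowerSeries.coeff_one, sub_eq_add_neg]

open PowerSeries in
theorem SA_rescale_sq (b : ℂ) : rescale b SA * rescale b SA = 1 - C b * X := by
  rw [← map_mul, SA_sq, map_sub, map_one, rescale_X]

theorem SA_coeff_le (n : ℕ) : ‖PowerSeries.coeff n SA‖ ≤ 1 := by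
  simpa [SA] using sqc_abs_le n

open PowerSeries in
theorem geo_mul (b : ℂ) : rescale b (PowerSeries.mk 1) * (1 - C b * X) = 1 := by
  rw [← rescale_X, ← map_one (rescale b), ← map_sub, ← map_mul, mk_one_mul_one_sub_eq_one]
open PowerSeries in
/-- Generating function of `L`, rescaled by `r`. -/
noncomputable def LG (r : ℂ) : PowerSeries ℂ := PowerSeries.mk fun n => (L n : ℂ) * r ^ n

open PowerSeries in
theorem LG_eq (r : ℂ) : LG r = (C r * X) * rescale r (PowerSeries.mk 1)
    + (C r * X) * LG r + (C r * X) * (LG r * LG r) := by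
  ext n
  cases n with
  | zero => simp [LG, L_zero]
  | succ n =>
    simp only [mul_assoc, map_add, coeff_C_mul, coeff_succ_X_mul, coeff_rescale]
    rw [coeff_mul]
    simp only [LG, coeff_mk, L_succ]
    push_cast
    have : ∑ p ∈ Finset.HasAntidiagonal.antidiagonal n,
        ((L p.1 : ℂ) * r ^ p.1 * ((L p.2 : ℂ) * r ^ p.2))
        = (∑ p ∈ Finset.HasAntidiagonal.antidiagonal n, (L p.1 : ℂ) * (L p.2 : ℂ)) * r ^ n := by
      rw [Finset.sum_mul]
      refine Finset.sum_congr rfl fun p hp => ?_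
      rw [← Finset.HasAntidiagonal.mem_antidiagonal.1 hp, pow_add]
      ring
    rw [this]
    simp only [Pi.one_apply]
    ring

theorem root_bound {ρ : ℝ} (h0 : 0 < ρ) (h : ρ ^ 3 + ρ ^ 2 + 3 * ρ - 1 = 0) : ρ < 0.4 := by
  by_contra hc
  push Not at hc
  have : 0 < ρ ^ 3 + ρ ^ 2 := by positivity
  nlinarith [mul_self_nonneg ρ]

theorem norm_root {ρ : ℝ} (h0 : 0 < ρ) (h1 : ρ < 0.4) {a : ℂ}
    (ha : a ^ 2 + (ρ ^ 2 + ρ) * a + ρ = 0) : ‖a‖ ≤ 1 := by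
  by_contra hc
  push Not at hc
  have e : a ^ 2 = -(((ρ ^ 2 + ρ : ℝ) : ℂ) * a + (ρ : ℂ)) := by
    push_cast; linear_combination ha
  have h2 : ‖a‖ ^ 2 ≤ (ρ ^ 2 + ρ) * ‖a‖ + ρ := by
    rw [← norm_pow, e, norm_neg]
    refine (norm_add_le _ _).trans ?_
    rw [norm_mul, Complex.norm_real, Complex.norm_real, Real.norm_of_nonneg (by positivity),
      Real.norm_of_nonneg h0.le]
  have h3 : ρ ^ 2 < 0.16 := by nlinarith
  nlinarith

open PowerSeries in
theorem LG_factor {ρ : ℝ} (h0 : 0 < ρ) (h : ρ ^ 3 + ρ ^ 2 + 3 * ρ - 1 = 0) :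
    ∃ G : PowerSeries ℂ, Wt G ∧
      ev G ^ 2 = ((ρ * (3 * ρ ^ 2 + 2 * ρ + 3) / (1 - ρ) : ℝ) : ℂ) ∧
      1 - C (ρ : ℂ) * X - C (2 * ρ : ℂ) * (X * LG ρ) = SA * G := by
  have hb := root_bound h0 h
  obtain ⟨s, hs⟩ := IsAlgClosed.exists_pow_nat_eq ((ρ ^ 2 + ρ : ℂ) ^ 2 - 4 * ρ) (n := 2) (by norm_num)
  set a : ℂ := (-(ρ ^ 2 + ρ) + s) / 2 with ha
  set b : ℂ := (-(ρ ^ 2 + ρ) - s) / 2 with hb'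
  have hsum : a + b = -((ρ : ℂ) ^ 2 + ρ) := by rw [ha, hb']; ring
  have hprod : a * b = ρ := by rw [ha, hb']; linear_combination -(1 / 4) * hs
  have hna : ‖a‖ ≤ 1 := norm_root h0 hb (by linear_combination a * hsum - hprod)
  have hnb : ‖b‖ ≤ 1 := norm_root h0 hb (by linear_combination b * hsum - hprod)
  have hρn : ‖(ρ : ℂ)‖ = ρ := by rw [Complex.norm_real, Real.norm_of_nonneg h0.le]
  have w1 : Wt (rescale (a * ρ) SA) := Wt.rescale SA_coeff_le (by
    rw [norm_mul, hρn]; nlinarith [norm_nonneg a])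
  have w2 : Wt (rescale (b * ρ) SA) := Wt.rescale SA_coeff_le (by
    rw [norm_mul, hρn]; nlinarith [norm_nonneg b])
  have w3 : Wt (rescale (ρ : ℂ) SA) := Wt.rescale SA_coeff_le (by
    rw [hρn]; linarith)
  have w4 : Wt (rescale (ρ : ℂ) (PowerSeries.mk 1)) := Wt.rescale (fun n => by simp) (by
    rw [hρn]; linarith)
  have q1 := SA_rescale_sq (a * ρ)
  have q2 := SA_rescale_sq (b * ρ)
  have q3 := SA_rescale_sq (ρ : ℂ)
  have q4 := geo_mul (ρ : ℂ)
  have hL := LG_eq (ρ : ℂ)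
  have hgc : constantCoeff (rescale (ρ : ℂ) (PowerSeries.mk 1)) = 1 := by
    rw [← coeff_zero_eq_constantCoeff_apply, coeff_rescale]; simp
  have hsc : ∀ c : ℂ, constantCoeff (rescale c SA) = 1 := by
    intro c
    rw [← coeff_zero_eq_constantCoeff_apply, coeff_rescale]; simp [SA, sqc]
  have hsc' : constantCoeff SA = 1 := by
    rw [← coeff_zero_eq_constantCoeff_apply]; simp [SA, sqc]
  have hA := hsc (a * ρ)
  have hB := hsc (b * ρ)
  have hR := hsc ρ
  generalize rescale (a * ρ) SA = A at *
  generalize rescale (b * ρ) SA = B at *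
  generalize rescale (ρ : ℂ) SA = R at *
  generalize rescale (ρ : ℂ) (PowerSeries.mk 1) = K at *
  generalize LG (ρ : ℂ) = l at *
  have hG : Wt (A * B * R * K) := ((w1.mul w2).mul w3).mul w4
  have hGG : (A * B * R * K) * (A * B * R * K) * (1 - C (ρ : ℂ) * X)
      = (1 - C (a * ρ) * X) * (1 - C (b * ρ) * X) := by
    rw [← q1, ← q2]
    have : A * B * R * K * (A * B * R * K) * (1 - C (ρ : ℂ) * X)
      = (A * A) * (B * B) * (R * R) * K * (K * (1 - C (ρ : ℂ) * X)) := by ring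
    rw [this, q3, q4]
    linear_combination (A * A * (B * B)) * q4
  have hrC : (ρ : ℂ) ^ 3 + ρ ^ 2 + 3 * ρ - 1 = 0 := by exact_mod_cast congrArg (fun x : ℝ => (x : ℂ)) h
  refine ⟨A * B * R * K, hG, ?_, ?_⟩
  · have hE := congrArg ev hGG
    rw [ev_mul (hG.mul hG) (Wt_lin _), ev_mul hG hG, ev_mul (Wt_lin _) (Wt_lin _), ev_lin, ev_lin,
      ev_lin] at hE
    have h1ρ : (1 - ρ : ℂ) ≠ 0 := by
      have : (1 - ρ : ℝ) ≠ 0 := by linarith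
      exact_mod_cast this
    push_cast
    rw [eq_div_iff h1ρ]
    linear_combination hE - (ρ : ℂ) * hsum + (ρ : ℂ) ^ 2 * hprod - hrC
  · have cs : (C a : PowerSeries ℂ) + C b = -(C (ρ : ℂ) ^ 2 + C (ρ : ℂ)) := by
      rw [← map_add, hsum]; simp
    have cp : (C a : PowerSeries ℂ) * C b = C (ρ : ℂ) := by
      rw [← map_mul, hprod]
    have cr : (C (ρ : ℂ) : PowerSeries ℂ) ^ 3 + C (ρ : ℂ) ^ 2 + 3 * C (ρ : ℂ) - 1 = 0 := by
      have := congrArg (C : ℂ →+* PowerSeries ℂ) hrC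
      have c3 : (C (3 : ℂ) : PowerSeries ℂ) = 3 := map_ofNat (C : ℂ →+* PowerSeries ℂ) 3
      simpa [c3] using this
    have c2 : (C (2 * ρ : ℂ) : PowerSeries ℂ) = 2 * C (ρ : ℂ) := by
      rw [map_mul]; rfl
    rw [map_mul, map_mul] at hGG
    rw [c2]
    have hne : (1 - C (ρ : ℂ) * X : PowerSeries ℂ) ≠ 0 := by
      intro h'
      have := congrArg constantCoeff h'
      simp at this
    have hsq : (1 - C (ρ : ℂ) * X - 2 * C (ρ : ℂ) * (X * l))
        * (1 - C (ρ : ℂ) * X - 2 * C (ρ : ℂ) * (X * l))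
        = (SA * (A * B * R * K)) * (SA * (A * B * R * K)) := by
      apply mul_right_cancel₀ hne
      have t : (SA * (A * B * R * K)) * (SA * (A * B * R * K)) * (1 - C (ρ : ℂ) * X)
          = (1 - X) * ((1 - C a * C (ρ : ℂ) * X) * (1 - C b * C (ρ : ℂ) * X)) := by
        rw [← hGG, ← SA_sq]; ring
      rw [t]
      generalize C (ρ : ℂ) = c at *
      generalize C a = a' at *
      generalize C b = b' at *
      linear_combination (-4 * (c * X) * (1 - c * X)) * hL - 4 * (c * X) ^ 2 * q4
        + (1 - X) * (c * X) * cs - (1 - X) * c ^ 2 * X ^ 2 * cp - X * cr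
    rcases mul_self_eq_mul_self_iff.1 hsq with h' | h'
    · exact h'
    · exfalso
      have := congrArg constantCoeff h'
      simp [hA, hB, hR, hgc, hsc'] at this
      norm_num [eq_neg_iff_add_eq_zero] at this

theorem L_asymptotics (ρ C : ℝ)
    (hρ_mem : ρ ∈ Set.Ioo (0 : ℝ) 1)
    (hρ_root : ρ ^ 3 + ρ ^ 2 + 3 * ρ - 1 = 0)
    (hC : C = Real.sqrt (ρ * (3 * ρ ^ 2 + 2 * ρ + 3) / (1 - ρ)) / (4 * ρ * Real.sqrt Real.pi)) :
    Filter.Tendsto (fun n : ℕ => (L n : ℝ) * ρ ^ n * (n : ℝ) ^ ((3 : ℝ) / 2))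
      Filter.atTop (nhds C) := by
  obtain ⟨h0, h1⟩ := hρ_mem
  obtain ⟨G, hG, hE, hS⟩ := LG_factor h0 hρ_root
  have hρ0 : (ρ : ℂ) ≠ 0 := by exact_mod_cast h0.ne'
  have hpi : 0 < Real.sqrt Real.pi := Real.sqrt_pos.2 Real.pi_pos
  have hpiC : ((Real.sqrt Real.pi : ℝ) : ℂ) ≠ 0 := by exact_mod_cast hpi.ne'
  have hlim := conv_lim (fun n => PowerSeries.coeff n G) hG
  change Filter.Tendsto _ _ (nhds (_ * ev G)) at hlim
  rw [← Filter.tendsto_add_atTop_iff_nat 1] at hlim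
  have hlim2 := hlim.const_mul (-1 / (2 * ρ) : ℂ)
  have hrat := (Complex.continuous_ofReal.tendsto _).comp
    ((tendsto_ratio 1).inv₀ one_ne_zero)
  have hlim3 := hlim2.mul hrat
  set D : ℂ := ev G / (4 * ρ * (Real.sqrt Real.pi : ℝ)) with hD
  have hlim4 : Filter.Tendsto (fun n : ℕ =>
      (((L n : ℝ) * ρ ^ n * (n : ℝ) ^ ((3 : ℝ) / 2) : ℝ) : ℂ)) Filter.atTop (nhds D) := by
    have e : (-1 / (2 * ρ) : ℂ) * (((-(1 / (2 * Real.sqrt Real.pi)) : ℝ) : ℂ) * ev G)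
        * (((1 : ℝ)⁻¹ : ℝ) : ℂ) = D := by
      rw [hD]; push_cast; field_simp; norm_num; ring
    rw [e] at hlim3
    refine hlim3.congr' ?_
    filter_upwards [Filter.eventually_ne_atTop 0] with n hn
    have hn' : (0 : ℝ) < n := by positivity
    have hc := congrArg (PowerSeries.coeff (n + 1)) hS
    rw [PowerSeries.coeff_mul] at hc
    simp only [SA, PowerSeries.coeff_mk] at hc
    rw [← hc]
    simp only [map_sub, PowerSeries.coeff_C_mul, PowerSeries.coeff_succ_X_mul,
      PowerSeries.coeff_one, PowerSeries.coeff_X, LG, PowerSeries.coeff_mk, Function.comp]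
    simp only [Nat.add_eq_zero_iff, one_ne_zero, and_false, if_false, Nat.add_eq_right, hn]
    have hr : ((n + 1 : ℕ) : ℝ) ^ ((3 : ℝ) / 2) * ((((n + 1 : ℕ) : ℝ) / n) ^ ((3 : ℝ) / 2))⁻¹
        = (n : ℝ) ^ ((3 : ℝ) / 2) := by
      rw [Real.div_rpow (by positivity) (by positivity)]
      have : (0 : ℝ) < ((n + 1 : ℕ) : ℝ) ^ ((3 : ℝ) / 2) := by positivity
      field_simp
    rw [← hr]
    generalize ((n + 1 : ℕ) : ℝ) ^ ((3 : ℝ) / 2) = u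
    generalize (((((n + 1 : ℕ) : ℝ) / n) ^ ((3 : ℝ) / 2))⁻¹) = v
    push_cast
    field_simp
    ring
  have hre := (Complex.continuous_re.tendsto _).comp hlim4
  have him := (Complex.continuous_im.tendsto _).comp hlim4
  simp only [Function.comp_def, Complex.ofReal_re, Complex.ofReal_im] at hre him
  have hDim : D.im = 0 := (tendsto_nhds_unique him tendsto_const_nhds)
  have hDre : 0 ≤ D.re := ge_of_tendsto' hre fun n => by positivity
  have hDD : D = (D.re : ℂ) := Complex.ext (by simp) (by simp [hDim])
  have hsqD : D ^ 2 = ((C ^ 2 : ℝ) : ℂ) := by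
    have hnn : 0 ≤ ρ * (3 * ρ ^ 2 + 2 * ρ + 3) / (1 - ρ) := by
      have : 0 < 1 - ρ := by linarith
      positivity
    rw [hD, div_pow, hE, hC, div_pow, Real.sq_sqrt hnn]
    push_cast
    rfl
  rw [hDD] at hsqD
  have hsq : D.re ^ 2 = C ^ 2 := by exact_mod_cast hsqD
  have hCnn : 0 ≤ C := by rw [hC]; positivity
  have : D.re = C := by
    rwa [sq_eq_sq₀ hDre hCnn] at hsq
  rwa [this] at hre
end

section
/- For every n : ℕ, the number of lambda terms of size n equals the number of zigzag-free binary trees with n nodes. (Equivalently, the maps LToBz and BzToL of the paper are mutually inverse size-preserving bijections between lambda terms and zigzag-free trees.) -/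
/-- Binary trees, where each node has an optional left child and an optional right child
(`nil` denotes the absence of a child; the empty tree is `nil`). -/
inductive BTree : Type
  | nil : BTree
  | node : BTree → BTree → BTree

/-- Number of nodes of a binary tree. -/
def BTree.size : BTree → ℕ
  | .nil => 0
  | .node l r => l.size + r.size + 1

/-- A binary tree is zigzag-free if it contains no node whose left child
has a right child but no left child. -/
def BTree.zigzagFree : BTree → Prop
  | .nil => True
  | .node l r =>
      (∀ a b : BTree, l ≠ .node .nil (.node a b)) ∧ l.zigzagFree ∧ r.zigzagFree

namespace ZZ

/-- The map from lambda terms to zigzag-free trees. -/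
def toB : Term → BTree
  | .var 0 => .node .nil .nil
  | .var (k + 1) => .node (toB (.var k)) .nil
  | .abs M => .node .nil (toB M)
  | .app (.abs M) N => .node (toB (.app M N)) .nil
  | .app (.var k) N => .node (toB (.var k)) (toB N)
  | .app (.app A B) N => .node (toB (.app A B)) (toB N)
termination_by t => t.size
decreasing_by all_goals simp only [Term.size]; omega

/-- Raising a term: inverse image of a tree whose root has only a left child. -/
def up : Term → Term
  | .var k => .var (k + 1)
  | .app M N => .app (.abs M) N
  | .abs M => .abs M

/-- The inverse map. -/
def toL : BTree → Term
  | .nil => .var 0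
  | .node .nil .nil => .var 0
  | .node .nil (.node a b) => .abs (toL (.node a b))
  | .node (.node a b) .nil => up (toL (.node a b))
  | .node (.node a b) (.node c d) => .app (toL (.node a b)) (toL (.node c d))

theorem toB_ne_nil (t : Term) : toB t ≠ .nil := by
  fun_cases toB t <;> simp [toB]

theorem toB_size (t : Term) : (toB t).size = t.size := by
  fun_induction toB t <;> simp_all [BTree.size, Term.size] <;> omega

theorem exists_node (t : Term) : ∃ a b, toB t = .node a b := by
  have := toB_ne_nil t
  cases h : toB t with
  | nil => exact absurd h this
  | node a b => exact ⟨a, b, rfl⟩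

theorem toL_toB (t : Term) : toL (toB t) = t := by
  fun_induction toB t with
  | case1 => simp [toL]
  | case2 k ih =>
    obtain ⟨a, b, h⟩ := exists_node (.var k)
    rw [h] at ih ⊢; simp [toL, ih, up]
  | case3 M ih =>
    obtain ⟨a, b, h⟩ := exists_node M
    rw [h] at ih ⊢; simp [toL, ih]
  | case4 M N ih =>
    obtain ⟨a, b, h⟩ := exists_node (.app M N)
    rw [h] at ih ⊢; simp [toL, ih, up]
  | case5 k N ih1 ih2 =>
    obtain ⟨a, b, h⟩ := exists_node (.var k)
    obtain ⟨c, d, h'⟩ := exists_node N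
    rw [h] at ih1 ⊢; rw [h'] at ih2 ⊢; simp [toL, ih1, ih2]
  | case6 A B N ih1 ih2 =>
    obtain ⟨a, b, h⟩ := exists_node (.app A B)
    obtain ⟨c, d, h'⟩ := exists_node N
    rw [h] at ih1 ⊢; rw [h'] at ih2 ⊢; simp [toL, ih1, ih2]

/-- Only abstractions are sent to the forbidden left subtrees. -/
theorem not_forbidden (t : Term) (ht : ∀ M, t ≠ .abs M) (a b : BTree) :
    toB t ≠ .node .nil (.node a b) := by
  intro h
  have h2 := toL_toB t
  rw [h, toL] at h2
  exact ht _ h2.symm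

theorem toB_zz (t : Term) : (toB t).zigzagFree := by
  fun_induction toB t with
  | case1 => simp [BTree.zigzagFree]
  | case2 k ih => exact ⟨not_forbidden _ (by simp), ih, trivial⟩
  | case3 M ih => exact ⟨by simp, trivial, ih⟩
  | case4 M N ih => exact ⟨not_forbidden _ (by simp), ih, trivial⟩
  | case5 k N ih1 ih2 => exact ⟨not_forbidden _ (by simp), ih1, ih2⟩
  | case6 A B N ih1 ih2 => exact ⟨not_forbidden _ (by simp), ih1, ih2⟩

theorem not_abs (l : BTree) (hl : toB (toL l) = l)
    (h : ∀ a b : BTree, l ≠ .node .nil (.node a b)) (M : Term) : toL l ≠ .abs M := by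
  intro e
  rw [e, toB] at hl
  obtain ⟨a, b, h'⟩ := exists_node M
  rw [h'] at hl
  exact h a b hl.symm

theorem toB_toL (t : BTree) (h0 : t ≠ .nil) (hz : t.zigzagFree) : toB (toL t) = t := by
  fun_induction toL t with
  | case1 => exact absurd rfl h0
  | case2 => simp [toB]
  | case3 a b ih => rw [toB, ih (by simp) hz.2.2]
  | case4 a b ih =>
    have e := ih (by simp) hz.2.1
    have n := not_abs _ e hz.1
    cases h : toL (.node a b) with
    | var k => rw [h] at e; rw [up, toB, e]
    | app M N => rw [h] at e; rw [up, toB, e]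
    | abs M => exact absurd h (n M)
  | case5 a b c d ih1 ih2 =>
    have e := ih1 (by simp) hz.2.1
    have e2 := ih2 (by simp) hz.2.2
    have n := not_abs _ e hz.1
    cases h : toL (.node a b) with
    | var k => rw [h] at e; rw [toB, e, e2]
    | app M N => rw [h] at e; rw [toB, e, e2]
    | abs M => exact absurd h (n M)

end ZZ

theorem lambda_equinumerous_zigzagFree :
    ∀ n : ℕ,
      L n = Nat.card {t : BTree // t ≠ .nil ∧ t.zigzagFree ∧ t.size = n} := by
  intro n
  exact Nat.card_congr
    { toFun := fun t => ⟨ZZ.toB t.1, ZZ.toB_ne_nil _, ZZ.toB_zz _, (ZZ.toB_size _).trans t.2⟩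
      invFun := fun t => ⟨ZZ.toL t.1, by
        rw [← ZZ.toB_size, ZZ.toB_toL _ t.2.1 t.2.2.1]; exact t.2.2.2⟩
      left_inv := fun t => Subtype.ext (ZZ.toL_toB _)
      right_inv := fun t => Subtype.ext (ZZ.toB_toL _ t.2.1 t.2.2.1) }
end

section
/- Let K n denote the number of neutral head normal forms of size n. Then K 1 = 1 and, for every n ≥ 1, K (n+1) = L n, where L n is the number of lambda terms of size n. -/
/-- Neutral head normal forms: terms of the form `app (app … (app (var k) N₁) …) N_p`
with `p ≥ 0` and arbitrary terms `N₁, …, N_p`. -/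
inductive IsNeutralHnf : Term → Prop
  | var (k : ℕ) : IsNeutralHnf (Term.var k)
  | app {m : Term} (n : Term) : IsNeutralHnf m → IsNeutralHnf (Term.app m n)

/-- `K n` is the number of neutral head normal forms of size `n`. -/
noncomputable def K (n : ℕ) : ℕ := Nat.card {t : Term // IsNeutralHnf t ∧ t.size = n}

/-- The bijection from terms of size `n` to neutral head normal forms of size `n + 1`. -/
def toNeutral : Term → Term
  | Term.var k => Term.var (k + 1)
  | Term.app M N => Term.app (toNeutral M) N
  | Term.abs M => Term.app (Term.var 0) M

theorem toNeutral_isNeutral (t : Term) : IsNeutralHnf (toNeutral t) := by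
  induction t with
  | var k => exact IsNeutralHnf.var _
  | app M N ih _ => exact IsNeutralHnf.app N ih
  | abs M _ => exact IsNeutralHnf.app M (IsNeutralHnf.var 0)

theorem toNeutral_size (t : Term) : (toNeutral t).size = t.size + 1 := by
  induction t with
  | var k => simp [toNeutral, Term.size]
  | app M N ih _ => simp only [toNeutral, Term.size, ih]; omega
  | abs M _ => simp only [toNeutral, Term.size]; omega

theorem toNeutral_ne (t : Term) : toNeutral t ≠ Term.var 0 := by
  cases t <;> simp [toNeutral]

theorem toNeutral_injective : Function.Injective toNeutral := by
  intro s
  induction s with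
  | var k => intro t h; cases t <;> simp_all [toNeutral]
  | app M N ih _ =>
    intro t h
    cases t with
    | var k => simp [toNeutral] at h
    | app M' N' =>
      simp only [toNeutral, Term.app.injEq] at h
      rw [ih h.1, h.2]
    | abs M' =>
      simp only [toNeutral, Term.app.injEq] at h
      exact absurd h.1 (toNeutral_ne M)
  | abs M _ =>
    intro t h
    cases t with
    | var k => simp [toNeutral] at h
    | app M' N' =>
      simp only [toNeutral, Term.app.injEq] at h
      exact absurd h.1.symm (toNeutral_ne M')
    | abs M' =>
      simp only [toNeutral, Term.app.injEq] at h
      rw [h.2]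

theorem toNeutral_surj {t : Term} (ht : IsNeutralHnf t) :
    t = Term.var 0 ∨ ∃ s, toNeutral s = t := by
  induction ht with
  | var k =>
    cases k with
    | zero => exact Or.inl rfl
    | succ k => exact Or.inr ⟨Term.var k, rfl⟩
  | app n _ ih =>
    rcases ih with rfl | ⟨s, rfl⟩
    · exact Or.inr ⟨Term.abs n, rfl⟩
    · exact Or.inr ⟨Term.app s n, rfl⟩

theorem size_pos (t : Term) : 1 ≤ t.size := by
  cases t <;> simp [Term.size]

theorem K_eq_L :
    K 1 = 1 ∧ ∀ n : ℕ, 1 ≤ n → K (n + 1) = L n := by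
  refine ⟨?_, fun n hn => ?_⟩
  · unfold K
    rw [Nat.card_eq_one_iff_exists]
    refine ⟨⟨Term.var 0, IsNeutralHnf.var 0, rfl⟩, ?_⟩
    rintro ⟨t, ht, hs⟩
    apply Subtype.ext
    rcases toNeutral_surj ht with h | ⟨s, rfl⟩
    · exact h
    · have := size_pos s
      rw [toNeutral_size] at hs
      omega
  · unfold K L
    symm
    refine Nat.card_eq_of_bijective
      (fun t : {t : Term // t.size = n} =>
        (⟨toNeutral t.1, toNeutral_isNeutral t.1, by rw [toNeutral_size, t.2]⟩ :
          {t : Term // IsNeutralHnf t ∧ t.size = n + 1})) ⟨?_, ?_⟩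
    · intro a b h
      exact Subtype.ext (toNeutral_injective (congrArg Subtype.val h))
    · rintro ⟨t, ht, hs⟩
      rcases toNeutral_surj ht with rfl | ⟨s, rfl⟩
      · simp only [Term.size] at hs
        omega
      · rw [toNeutral_size] at hs
        exact ⟨⟨s, by omega⟩, rfl⟩
end

section
/- Let K n denote the number of neutral head normal forms of size n. Then the sequence n ↦ K (n+1) · ρ^n · n^{3/2} converges to C as n → ∞; that is, K (n+1) ∼ (1/ρ)^n · C / n^{3/2}. -/
section Comb

def termEquivSucc (n : ℕ) : {t : Term // t.size = n + 1} ≃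
    Unit ⊕ ({t : Term // t.size = n} ⊕
      (Σ p : Finset.HasAntidiagonal.antidiagonal n, {t : Term // t.size = p.1.1} × {t : Term // t.size = p.1.2})) where
  toFun t := match t with
    | ⟨.var k, h⟩ => .inl ()
    | ⟨.abs M, h⟩ => .inr (.inl ⟨M, by simpa [Term.size] using h⟩)
    | ⟨.app M N, h⟩ => .inr (.inr ⟨⟨(M.size, N.size), by simpa [Term.size] using h⟩, ⟨M, rfl⟩, ⟨N, rfl⟩⟩)
  invFun s := match s with
    | .inl _ => ⟨.var n, by simp [Term.size]⟩
    | .inr (.inl M) => ⟨.abs M.1, by simp [Term.size, M.2]⟩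
    | .inr (.inr ⟨p, M, N⟩) => ⟨.app M.1 N.1, by
        have := Finset.HasAntidiagonal.mem_antidiagonal.1 p.2
        simp [Term.size, M.2, N.2, this]⟩
  left_inv t := by
    rcases t with ⟨_ | _ | _, h⟩
    · simp [Term.size] at h; simp [h]
    · rfl
    · rfl
  right_inv s := by
    rcases s with _ | M | ⟨⟨⟨i, j⟩, hp⟩, ⟨M, hM⟩, ⟨N, hN⟩⟩
    · rfl
    · rfl
    · dsimp only at hM hN
      subst hM hN
      rfl

def neutEquivSucc (n : ℕ) : {t : Term // IsNeutralHnf t ∧ t.size = n + 1} ≃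
    Unit ⊕
      (Σ p : Finset.HasAntidiagonal.antidiagonal n, {t : Term // IsNeutralHnf t ∧ t.size = p.1.1} ×
        {t : Term // t.size = p.1.2}) where
  toFun t := match t with
    | ⟨.var k, h⟩ => .inl ()
    | ⟨.abs M, h⟩ => False.elim (by cases h.1)
    | ⟨.app M N, h⟩ => .inr ⟨⟨(M.size, N.size), by simpa [Term.size] using h.2⟩,
        ⟨M, by cases h.1; assumption, rfl⟩, ⟨N, rfl⟩⟩
  invFun s := match s with
    | .inl _ => ⟨.var n, .var n, by simp [Term.size]⟩
    | .inr ⟨p, M, N⟩ => ⟨.app M.1 N.1, .app _ M.2.1, by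
        have := Finset.HasAntidiagonal.mem_antidiagonal.1 p.2
        simp [Term.size, M.2.2, N.2, this]⟩
  left_inv t := by
    rcases t with ⟨_ | _ | _, h⟩
    · have := h.2
      simp [Term.size] at this; simp [this]
    · rfl
    · cases h.1
  right_inv s := by
    rcases s with _ | ⟨⟨⟨i, j⟩, hp⟩, ⟨M, hM', hM⟩, ⟨N, hN⟩⟩
    · rfl
    · dsimp only at hM hN
      subst hM hN
      rfl

theorem size_ne_zero (t : Term) : t.size ≠ 0 := by
  cases t <;> simp [Term.size]

instance finite_size_s9 (n : ℕ) : Finite {t : Term // t.size = n} := by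
  induction n using Nat.strong_induction_on with
  | _ n ih =>
    cases n with
    | zero =>
      have : IsEmpty {t : Term // t.size = 0} := ⟨fun t => size_ne_zero _ t.2⟩
      infer_instance
    | succ n =>
      have h0 := ih n (by omega)
      have : ∀ p : Finset.HasAntidiagonal.antidiagonal n,
          Finite ({t : Term // t.size = p.1.1} × {t : Term // t.size = p.1.2}) := by
        intro p
        have := Finset.HasAntidiagonal.mem_antidiagonal.1 p.2
        have h1 := ih p.1.1 (by omega)
        have h2 := ih p.1.2 (by omega)
        infer_instance
      exact Finite.of_equiv _ (termEquivSucc n).symm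

instance finite_neut (n : ℕ) : Finite {t : Term // IsNeutralHnf t ∧ t.size = n} :=
  Finite.of_injective (β := {t : Term // t.size = n}) (fun t => ⟨t.1, t.2.2⟩) (by
    intro a b h
    simpa [Subtype.ext_iff] using h)

theorem K_zero : K 0 = 0 := by
  have : IsEmpty {t : Term // IsNeutralHnf t ∧ t.size = 0} := ⟨fun t => size_ne_zero _ t.2.2⟩
  simp [K]

theorem K_succ (n : ℕ) : K (n + 1) = 1 + ∑ p ∈ Finset.HasAntidiagonal.antidiagonal n, K p.1 * L p.2 := by
  rw [K, Nat.card_congr (neutEquivSucc n), Nat.card_sum, Nat.card_sigma,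
    Finset.sum_coe_sort (Finset.HasAntidiagonal.antidiagonal n) (fun p => Nat.card ({t : Term // IsNeutralHnf t ∧ t.size = p.1} × {t : Term // t.size = p.2}))]
  simp [Nat.card_prod, L, K]

end Comb

section Ser

open PowerSeries

noncomputable def lser : PowerSeries ℝ := PowerSeries.mk fun n => (L n : ℝ)
noncomputable def kser : PowerSeries ℝ := PowerSeries.mk fun n => (K n : ℝ)
noncomputable def eser : PowerSeries ℝ := PowerSeries.mk fun _ => (1 : ℝ)

theorem eser_eq : (1 - X) * eser = 1 := by
  rw [mul_comm]; exact PowerSeries.mk_one_mul_one_sub_eq_one ℝ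

theorem lser_eq : lser = X * (eser + lser + lser ^ 2) := by
  ext n
  cases n with
  | zero => simp [lser, L_zero]
  | succ n =>
    rw [coeff_succ_X_mul, sq]
    simp [lser, eser, coeff_mul, L_succ]

theorem kser_eq : kser = X * (eser + kser * lser) := by
  ext n
  cases n with
  | zero => simp [kser, K_zero]
  | succ n =>
    rw [coeff_succ_X_mul]
    simp [lser, kser, eser, coeff_mul, K_succ]

theorem kser_eq' : kser = X + X * lser := by
  have h1 := eser_eq
  have h2 := lser_eq
  have h3 := kser_eq
  have hne : (1 - X * lser : PowerSeries ℝ) ≠ 0 := by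
    intro h
    have := congrArg (constantCoeff (R := ℝ)) h
    simp at this
  apply mul_left_cancel₀ hne
  linear_combination h3 - X * h2 + X * h1

theorem tser_sq : (1 - X) * (1 + X - 2 * kser) ^ 2 = 1 - 3 * X - X ^ 2 - X ^ 3 := by
  have h1 := eser_eq
  have h2 := lser_eq
  rw [kser_eq']
  linear_combination (-4 * X * (1 - X)) * h2 + (-4 * X ^ 2) * h1

noncomputable def aser : PowerSeries ℝ :=
  1 - C (1 / 2) * X * rescale (1 / 4) (PowerSeries.map (Nat.castRingHom ℝ) catalanSeries)

theorem aser_sq : aser ^ 2 = 1 - X := by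
  have h := catalanSeries_sq_mul_X_add_one
  have h := congrArg (fun s => rescale (1 / 4 : ℝ) (PowerSeries.map (Nat.castRingHom ℝ) s)) h
  simp only [map_add, map_mul, map_pow, map_X, map_one, rescale_X] at h
  rw [aser]
  generalize rescale (1 / 4 : ℝ) (PowerSeries.map (Nat.castRingHom ℝ) catalanSeries) = c at *
  have h4 : (C (1 / 2 : ℝ)) ^ 2 = C (1 / 4 : ℝ) := by rw [← map_pow]; norm_num
  have h2 : 2 * C (1 / 2 : ℝ) = 1 := by
    rw [← map_ofNat (C (R := ℝ)), ← map_mul, ← map_one C]; norm_num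
  linear_combination X * h + (X ^ 2 * c ^ 2) * h4 - X * c * h2

theorem coeff_aser_succ (n : ℕ) : coeff (n + 1) aser = - (1 / 2) * (catalan n / 4 ^ n) := by
  simp [aser, mul_assoc, coeff_one, div_eq_mul_inv]
  ring

theorem coeff_aser_zero : coeff 0 aser = 1 := by
  simp [aser]

end Ser

section Asym
open Filter Topology Real

theorem centralBinom_asym :
    Tendsto (fun n : ℕ => (n.centralBinom : ℝ) / 4 ^ n * √n) atTop (𝓝 (1 / √π)) := by
  have h := Stirling.tendsto_stirlingSeq_sqrt_pi
  have h2 : Tendsto (fun n : ℕ => Stirling.stirlingSeq (2 * n)) atTop (𝓝 (√π)) :=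
    h.comp (tendsto_id.const_mul_atTop' (by norm_num : 0 < 2))
  have hp : √π ≠ 0 := by positivity
  have h3 := h2.div (h.pow 2) (by positivity)
  have e : √π / √π ^ 2 = 1 / √π := by field_simp
  rw [e] at h3
  refine h3.congr' ?_
  filter_upwards [eventually_gt_atTop 0] with n hn
  have hn' : (0 : ℝ) < n := by exact_mod_cast hn
  have hc : ((2 * n).factorial : ℝ) = n.centralBinom * (n.factorial : ℝ) ^ 2 := by
    have := Nat.choose_mul_factorial_mul_factorial (n := 2 * n) (k := n) (by omega)
    rw [← this, Nat.centralBinom, show 2 * n - n = n by omega]; push_cast; ring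
  simp only [Pi.div_apply, Stirling.stirlingSeq]
  rw [hc]
  have s1 : √(2 * ((2 * n : ℕ) : ℝ)) = 2 * √n := by
    rw [show (2 * ((2 * n : ℕ) : ℝ)) = 2 ^ 2 * n by push_cast; ring, Real.sqrt_mul (by positivity),
      Real.sqrt_sq (by norm_num)]
  have s2 : √(2 * (n : ℝ)) ^ 2 = 2 * n := Real.sq_sqrt (by positivity)
  have s3 : √(n : ℝ) ^ 2 = n := Real.sq_sqrt (by positivity)
  have hs : 0 < √(n : ℝ) := by positivity
  have hf : (0 : ℝ) < n.factorial := by positivity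
  rw [div_pow (n.factorial : ℝ), mul_pow, s1, s2]
  push_cast
  have p1 : (2 * (n : ℝ) / Real.exp 1) ^ (2 * n) = 4 ^ n * ((n / Real.exp 1) ^ n) ^ 2 := by
    rw [mul_div_assoc, mul_pow, pow_mul, ← pow_mul _ n 2, mul_comm n 2]; norm_num
  rw [p1]
  have : (0 : ℝ) < (n / Real.exp 1) ^ n := by positivity
  generalize ((n : ℝ) / Real.exp 1) ^ n = q at *
  have h4 : (0 : ℝ) < 4 ^ n := by positivity
  field_simp
  linear_combination -(n.centralBinom : ℝ) * s3

theorem aser_asym :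
    Tendsto (fun n : ℕ => PowerSeries.coeff n aser * (n : ℝ) ^ ((3 : ℝ) / 2)) atTop
      (𝓝 (- (1 / (2 * √π)))) := by
  rw [← tendsto_add_atTop_iff_nat 1]
  have h := centralBinom_asym
  -- ratio sqrt((n+1)/n) → 1
  have hr : Tendsto (fun n : ℕ => √(((n + 1 : ℕ) : ℝ) / n)) atTop (𝓝 1) := by
    have : Tendsto (fun n : ℕ => 1 + 1 / (n : ℝ)) atTop (𝓝 (1 + 0)) :=
      tendsto_const_nhds.add tendsto_one_div_atTop_nhds_zero_nat
    have := this.sqrt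
    simp only [add_zero, Real.sqrt_one] at this
    refine this.congr' ?_
    filter_upwards [eventually_gt_atTop 0] with n hn
    congr 1
    push_cast
    field_simp
  have h3 := (h.mul hr).const_mul (-(1 / 2))
  have e : -(1 / 2) * (1 / √π * 1) = - (1 / (2 * √π)) := by field_simp
  rw [e] at h3
  refine h3.congr' ?_
  filter_upwards [eventually_gt_atTop 0] with n hn
  have hn' : (0 : ℝ) < n := by exact_mod_cast hn
  rw [coeff_aser_succ, catalan_eq_centralBinom_div, Nat.cast_div (Nat.succ_dvd_centralBinom n) (by positivity),
    Real.sqrt_div (by positivity)]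
  have : ((n + 1 : ℕ) : ℝ) ^ ((3 : ℝ) / 2) = (n + 1 : ℕ) * √((n + 1 : ℕ) : ℝ) := by
    rw [Real.sqrt_eq_rpow, ← Real.rpow_one_add' (by positivity) (by norm_num)]; norm_num
  rw [this]
  have hs : 0 < √(n : ℝ) := by positivity
  have h1 : (0 : ℝ) < ((n + 1 : ℕ) : ℝ) := by positivity
  generalize ((n + 1 : ℕ) : ℝ) = m at *
  field_simp

/-- convolution transfer -/
theorem transfer (a h : ℕ → ℝ) (c r M : ℝ) (hr : 1 < r)
    (ha : Tendsto (fun n : ℕ => a n * (n : ℝ) ^ ((3 : ℝ) / 2)) atTop (𝓝 c))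
    (hh : ∀ k, |h k| * r ^ k ≤ M) :
    Tendsto (fun n : ℕ => (∑ k ∈ Finset.range (n + 1), h k * a (n - k)) * (n : ℝ) ^ ((3 : ℝ) / 2))
      atTop (𝓝 ((∑' k, h k) * c)) := by
  set p : ℝ := 3 / 2 with hp
  have hp0 : 0 < p := by norm_num [hp]
  -- bound on a
  obtain ⟨B, hB⟩ : ∃ B : ℝ, ∀ n : ℕ, |a n| * ((n : ℝ) + 1) ^ p ≤ B := by
    have hlim : Tendsto (fun n : ℕ => a n * ((n : ℝ) + 1) ^ p) atTop (𝓝 (c * 1 ^ p)) := by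
      have : Tendsto (fun n : ℕ => 1 + 1 / (n : ℝ)) atTop (𝓝 (1 + 0)) :=
        tendsto_const_nhds.add tendsto_one_div_atTop_nhds_zero_nat
      rw [add_zero] at this
      refine (ha.mul (this.rpow_const (p := p) (Or.inl one_ne_zero))).congr' ?_
      filter_upwards [eventually_gt_atTop 0] with n hn
      have hn' : (0 : ℝ) < n := by exact_mod_cast hn
      rw [mul_assoc, ← Real.mul_rpow (by positivity) (by positivity)]
      congr 2
      field_simp
    obtain ⟨B, hB⟩ := (hlim.abs).bddAbove_range
    refine ⟨B, fun n => ?_⟩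
    have := hB ⟨n, rfl⟩
    simp only [abs_mul] at this
    rwa [abs_of_nonneg (a := ((n : ℝ) + 1) ^ p) (by positivity)] at this
  have hB0 : 0 ≤ B := le_trans (by positivity) (hB 0)
  have hM0 : 0 ≤ M := le_trans (by positivity) (hh 0)
  have hr0 : 0 < r := by linarith
  -- shifted limit
  have hshift : ∀ k : ℕ, Tendsto (fun n : ℕ => a (n - k) * (n : ℝ) ^ p) atTop (𝓝 c) := by
    intro k
    rw [← tendsto_add_atTop_iff_nat k]
    have : Tendsto (fun n : ℕ => 1 + (k : ℝ) * (1 / (n : ℝ))) atTop (𝓝 (1 + k * 0)) :=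
        tendsto_const_nhds.add (tendsto_one_div_atTop_nhds_zero_nat.const_mul _)
    rw [mul_zero, add_zero] at this
    have h2 := ha.mul (this.rpow_const (p := p) (Or.inl one_ne_zero))
    rw [Real.one_rpow, mul_one] at h2
    refine h2.congr' ?_
    filter_upwards [eventually_gt_atTop 0] with n hn
    have hn' : (0 : ℝ) < n := by exact_mod_cast hn
    rw [mul_assoc, ← Real.mul_rpow (by positivity) (by positivity), Nat.add_sub_cancel]
    congr 2
    push_cast
    field_simp
  have key := tendsto_tsum_of_dominated_convergence (𝓕 := atTop)
    (f := fun (n k : ℕ) => if k ≤ n then h k * (a (n - k) * (n : ℝ) ^ p) else 0)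
    (g := fun k => h k * c) (bound := fun k : ℕ => M * B * (((k : ℝ) + 1) ^ 2 * (r⁻¹) ^ k)) ?_ ?_ ?_
  · rw [← tsum_mul_right]
    refine key.congr fun n => ?_
    rw [tsum_eq_sum (s := Finset.range (n + 1)), Finset.sum_mul]
    · refine Finset.sum_congr rfl fun k hk => ?_
      rw [if_pos (by simpa [Nat.lt_succ_iff] using hk), mul_assoc]
    · intro k hk
      rw [if_neg (by simpa [Nat.lt_succ_iff] using hk)]
  · apply Summable.mul_left
    have hq : ‖r⁻¹‖ < 1 := by
      rw [Real.norm_of_nonneg (by positivity)]; exact inv_lt_one_of_one_lt₀ hr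
    have s2 := summable_pow_mul_geometric_of_norm_lt_one 2 hq
    have s1 := summable_pow_mul_geometric_of_norm_lt_one 1 hq
    have s0 := summable_pow_mul_geometric_of_norm_lt_one 0 hq
    refine ((s2.add (s1.mul_left 2)).add s0).congr fun k => ?_
    ring
  · intro k
    refine ((hshift k).const_mul (h k)).congr' ?_
    filter_upwards [eventually_ge_atTop k] with n hn
    rw [if_pos hn]
  · refine Eventually.of_forall fun n k => ?_
    split_ifs with hk
    · obtain ⟨m, rfl⟩ := Nat.exists_eq_add_of_le hk
      rw [Nat.add_sub_cancel_left, Real.norm_eq_abs, abs_mul, abs_mul,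
        abs_of_nonneg (a := ((k + m : ℕ) : ℝ) ^ p) (by positivity)]
      have e1 : ((k + m : ℕ) : ℝ) ^ p ≤ ((k : ℝ) + 1) ^ p * ((m : ℝ) + 1) ^ p := by
        rw [← Real.mul_rpow (by positivity) (by positivity)]
        apply Real.rpow_le_rpow (by positivity) _ hp0.le
        push_cast
        nlinarith [(Nat.cast_nonneg k : (0 : ℝ) ≤ k), (Nat.cast_nonneg m : (0 : ℝ) ≤ m)]
      have e2 : ((k : ℝ) + 1) ^ p ≤ ((k : ℝ) + 1) ^ 2 := by
        rw [← Real.rpow_natCast]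
        apply Real.rpow_le_rpow_of_exponent_le
        · linarith [(Nat.cast_nonneg k : (0 : ℝ) ≤ k)]
        · norm_num [hp]
      have e3 : |h k| ≤ M * (r⁻¹) ^ k := by
        rw [inv_pow, ← div_eq_mul_inv, le_div_iff₀ (by positivity)]; exact hh k
      calc |h k| * (|a m| * ((k + m : ℕ) : ℝ) ^ p)
          ≤ (M * (r⁻¹) ^ k) * (|a m| * (((k : ℝ) + 1) ^ p * ((m : ℝ) + 1) ^ p)) := by gcongr
        _ = (M * (r⁻¹) ^ k) * ((|a m| * ((m : ℝ) + 1) ^ p) * ((k : ℝ) + 1) ^ p) := by ring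
        _ ≤ (M * (r⁻¹) ^ k) * (B * ((k : ℝ) + 1) ^ 2) := by gcongr; exact hB m
        _ = _ := by ring
    · rw [norm_zero]; positivity

/-- square root bound: if `h*h = g`, `h 0 = 1`, and `∑_{k≥1} |g k| r^k ≤ 1` then same for `h`. -/
theorem sqrt_bound (h g : ℕ → ℝ) (r : ℝ) (hr : 0 < r) (h0 : h 0 = 1)
    (hg : ∀ n, ∑ p ∈ Finset.HasAntidiagonal.antidiagonal n, h p.1 * h p.2 = g n)
    (hs : ∀ N, ∑ k ∈ Finset.range N, |g (k + 1)| * r ^ (k + 1) ≤ 1) (N : ℕ) :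
    ∑ k ∈ Finset.range N, |h (k + 1)| * r ^ (k + 1) ≤ 1 := by
  induction N with
  | zero => simp
  | succ N ih =>
    set w : ℕ → ℝ := fun k => |h (k + 1)| * r ^ (k + 1) with hw
    have hw0 : ∀ k, 0 ≤ w k := fun k => by positivity
    have hx : ∀ n, 2 * w n ≤ |g (n + 1)| * r ^ (n + 1) +
        (∑ k ∈ Finset.range n, w k * w (n - 1 - k)) := by
      intro n
      have e := hg (n + 1)
      rw [Finset.Nat.sum_antidiagonal_eq_sum_range_succ (fun i j => h i * h j), Finset.sum_range_succ,
        Finset.sum_range_succ'] at e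
      simp only [h0, Nat.sub_self, Nat.sub_zero, one_mul, mul_one] at e
      have e' : 2 * h (n + 1) = g (n + 1) - ∑ k ∈ Finset.range n, h (k + 1) * h (n + 1 - (k + 1)) := by
        linarith
      have e2 : 2 * |h (n + 1)| ≤ |g (n + 1)| + ∑ k ∈ Finset.range n, |h (k + 1)| * |h (n + 1 - (k + 1))| := by
        calc 2 * |h (n + 1)| = |2 * h (n + 1)| := by rw [abs_mul]; norm_num
          _ ≤ |g (n + 1)| + |∑ k ∈ Finset.range n, h (k + 1) * h (n + 1 - (k + 1))| := by
            rw [e']; exact abs_sub _ _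
          _ ≤ _ := by
            gcongr
            refine (Finset.abs_sum_le_sum_abs _ _).trans (le_of_eq ?_)
            simp only [abs_mul]
      have e3 := mul_le_mul_of_nonneg_right e2 (by positivity : 0 ≤ r ^ (n + 1))
      rw [add_mul, Finset.sum_mul] at e3
      have e4 : ∑ k ∈ Finset.range n, |h (k + 1)| * |h (n + 1 - (k + 1))| * r ^ (n + 1)
          = ∑ k ∈ Finset.range n, w k * w (n - 1 - k) := by
        refine Finset.sum_congr rfl fun k hk => ?_
        have hk' := Finset.mem_range.1 hk
        obtain ⟨m, rfl⟩ := Nat.exists_eq_add_of_lt hk'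
        simp only [hw]
        rw [show k + m + 1 + 1 - (k + 1) = m + 1 by omega, show k + m + 1 - 1 - k = m by omega]
        ring
      rw [e4] at e3
      simp only [hw] at e3 ⊢
      linarith
    have hsum : ∑ n ∈ Finset.range (N + 1), ∑ k ∈ Finset.range n, w k * w (n - 1 - k)
        ≤ (∑ k ∈ Finset.range N, w k) * (∑ k ∈ Finset.range N, w k) := by
      rw [Finset.sum_mul_sum, Finset.sum_sigma', ← Finset.sum_product']
      have hinj : Set.InjOn (fun x : (_ : ℕ) × ℕ => (x.2, x.1 - 1 - x.2))
          ((Finset.range (N + 1)).sigma fun n => Finset.range n : Finset ((_ : ℕ) × ℕ)) := by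
        rintro ⟨n, k⟩ hx ⟨n', k'⟩ hx' he
        simp only [Finset.coe_sigma, Set.mem_sigma_iff, Finset.coe_range, Set.mem_Iio] at hx hx'
        simp only [Prod.mk.injEq] at he
        obtain ⟨rfl, h2⟩ := he
        obtain rfl : n = n' := by omega
        rfl
      rw [← Finset.sum_image (f := fun x : ℕ × ℕ => w x.1 * w x.2) hinj]
      refine Finset.sum_le_sum_of_subset_of_nonneg ?_ fun x _ _ => mul_nonneg (hw0 _) (hw0 _)
      intro x hx
      rw [Finset.mem_image] at hx
      obtain ⟨⟨n, k⟩, hm, rfl⟩ := hx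
      simp only [Finset.mem_sigma, Finset.mem_range] at hm
      simp only [Finset.mem_product, Finset.mem_range]
      omega
    have := Finset.sum_le_sum (fun n (_ : n ∈ Finset.range (N + 1)) => hx n)
    rw [Finset.sum_add_distrib, ← Finset.mul_sum] at this
    have h1 := hs (N + 1)
    have h2 : 0 ≤ ∑ k ∈ Finset.range N, w k := Finset.sum_nonneg fun k _ => hw0 k
    nlinarith

end Asym

section Final
open PowerSeries

noncomputable def sser (ρ : ℝ) : PowerSeries ℝ := rescale ρ (1 + X - 2 * kser)

theorem sser_sq (ρ : ℝ) (hρ : ρ ^ 3 + ρ ^ 2 + 3 * ρ - 1 = 0) :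
    (1 - C ρ * X) * sser ρ ^ 2 = (1 - X) * (1 + C (ρ ^ 3 + ρ ^ 2) * X + C (ρ ^ 3) * X ^ 2) := by
  have h := congrArg (rescale ρ) tser_sq
  have h3 : rescale ρ (3 : PowerSeries ℝ) = 3 := map_ofNat _ 3
  have hc : (C ρ) ^ 3 + (C ρ) ^ 2 + 3 * C ρ - 1 = 0 := by
    have := congrArg (C (R := ℝ)) hρ
    simpa [map_ofNat] using this
  simp only [map_mul, map_sub, map_pow, map_one, rescale_X, h3] at h
  rw [sser]
  simp only [map_mul, map_sub, map_pow, map_one, map_add, rescale_X] at h ⊢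
  linear_combination h - X * hc

noncomputable def hser (ρ : ℝ) : PowerSeries ℝ := sser ρ * aser⁻¹

theorem aser_cc : constantCoeff aser = 1 := by
  rw [← coeff_zero_eq_constantCoeff_apply, coeff_aser_zero]

theorem hser_mul (ρ : ℝ) : hser ρ * aser = sser ρ := by
  rw [hser, mul_assoc, PowerSeries.inv_mul_cancel _ (by rw [aser_cc]; exact one_ne_zero), mul_one]

theorem hser_sq (ρ : ℝ) (hρ : ρ ^ 3 + ρ ^ 2 + 3 * ρ - 1 = 0) :
    (1 - C ρ * X) * hser ρ ^ 2 = 1 + C (ρ ^ 3 + ρ ^ 2) * X + C (ρ ^ 3) * X ^ 2 := by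
  have hne : (1 - X : PowerSeries ℝ) ≠ 0 := by
    intro h
    have := congrArg (constantCoeff (R := ℝ)) h
    simp at this
  apply mul_left_cancel₀ hne
  have h := sser_sq ρ hρ
  rw [← hser_mul] at h
  linear_combination h - (1 - C ρ * X) * hser ρ ^ 2 * aser_sq

theorem coeff_hsq (ρ : ℝ) (hρ : ρ ^ 3 + ρ ^ 2 + 3 * ρ - 1 = 0) :
    coeff 0 (hser ρ ^ 2) = 1 ∧ coeff 1 (hser ρ ^ 2) = ρ + (ρ ^ 3 + ρ ^ 2) ∧
    ∀ n, coeff (n + 2) (hser ρ ^ 2) = (ρ * (ρ + (ρ ^ 3 + ρ ^ 2)) + ρ ^ 3) * ρ ^ n := by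
  have h := hser_sq ρ hρ
  generalize hser ρ ^ 2 = G at *
  generalize ρ ^ 3 + ρ ^ 2 = b at *
  generalize ρ ^ 3 = c at *
  have h' : G = X * (C ρ * G) + (1 + C b * X + C c * X ^ 2) := by
    linear_combination h
  have e0 : coeff 0 G = 1 := by rw [h']; simp
  have e1 : coeff 1 G = ρ + b := by
    rw [h', map_add, show (1 : ℕ) = 0 + 1 from rfl, coeff_succ_X_mul, coeff_C_mul, e0]
    simp [coeff_one, coeff_X_pow, coeff_X]
  refine ⟨e0, e1, fun n => ?_⟩
  induction n with
  | zero =>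
    rw [h', map_add, show (0 + 2 : ℕ) = 1 + 1 from rfl, coeff_succ_X_mul, coeff_C_mul, e1]
    simp [coeff_one, coeff_X_pow, coeff_X]
  | succ n ih =>
    rw [h', map_add, show (n + 1 + 2 : ℕ) = (n + 2) + 1 from rfl, coeff_succ_X_mul, coeff_C_mul, ih]
    simp [coeff_one, coeff_X_pow, coeff_X]
    ring

theorem hasSum_hsq (ρ : ℝ) (hρ : ρ ^ 3 + ρ ^ 2 + 3 * ρ - 1 = 0) (h0 : 0 < ρ) (r : ℝ) (hr : 0 < r)
    (hr1 : ρ * r < 1) :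
    HasSum (fun n => coeff n (hser ρ ^ 2) * r ^ n)
      ((1 + (ρ ^ 3 + ρ ^ 2) * r + ρ ^ 3 * r ^ 2) / (1 - ρ * r)) := by
  obtain ⟨e0, e1, e2⟩ := coeff_hsq ρ hρ
  rw [← hasSum_nat_add_iff' 2]
  have hs := (hasSum_geometric_of_lt_one (by positivity : 0 ≤ ρ * r) hr1).mul_left
    ((ρ * (ρ + (ρ ^ 3 + ρ ^ 2)) + ρ ^ 3) * r ^ 2)
  have hd : 1 - ρ * r ≠ 0 := by linarith
  convert hs using 1
  · rfl
  · funext n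
    rw [e2, mul_pow]; ring
  · rw [Finset.sum_range_succ, Finset.sum_range_one, e0, e1]
    field_simp
    ring

theorem coeff_sser (ρ : ℝ) (n : ℕ) : coeff (n + 2) (sser ρ) = -2 * K (n + 2) * ρ ^ (n + 2) := by
  have h2 : (2 : PowerSeries ℝ) = C 2 := (map_ofNat C 2).symm
  rw [sser, coeff_rescale, h2]
  simp [coeff_one, coeff_X, kser, coeff_C_mul]
  ring

end Final

theorem K_asymptotics (ρ C : ℝ)
    (hρ_mem : ρ ∈ Set.Ioo (0 : ℝ) 1)
    (hρ_root : ρ ^ 3 + ρ ^ 2 + 3 * ρ - 1 = 0)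
    (hC : C = Real.sqrt (ρ * (3 * ρ ^ 2 + 2 * ρ + 3) / (1 - ρ)) / (4 * ρ * Real.sqrt Real.pi)) :
    Filter.Tendsto (fun n : ℕ => (K (n + 1) : ℝ) * ρ ^ n * (n : ℝ) ^ ((3 : ℝ) / 2))
      Filter.atTop (nhds C) := by
  obtain ⟨h0, h1⟩ := hρ_mem
  have hlt : ρ < 3 / 10 := by
    by_contra hcon
    push Not at hcon
    nlinarith [pow_le_pow_left₀ (by norm_num) hcon 2, pow_le_pow_left₀ (by norm_num) hcon 3]
  have hsq : ρ ^ 2 ≤ 9 / 100 := by nlinarith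
  have hcb : ρ ^ 3 ≤ 27 / 1000 := by nlinarith
  obtain ⟨e0, e1, e2⟩ := coeff_hsq ρ hρ_root
  set h : ℕ → ℝ := fun n => PowerSeries.coeff n (hser ρ) with hh
  have hH0 : h 0 = 1 := by
    have : PowerSeries.constantCoeff kser = 0 := by
      rw [← PowerSeries.coeff_zero_eq_constantCoeff_apply]; simp [kser, K_zero]
    have h2 : PowerSeries.constantCoeff (sser ρ) = 1 := by
      rw [← PowerSeries.coeff_zero_eq_constantCoeff_apply, sser, PowerSeries.coeff_rescale]
      simp [this]
    simp [hh, hser, h2, aser_cc]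
  have hg : ∀ n, ∑ p ∈ Finset.HasAntidiagonal.antidiagonal n, h p.1 * h p.2
      = PowerSeries.coeff n (hser ρ ^ 2) := by
    intro n
    rw [sq, PowerSeries.coeff_mul]
  have gnn : ∀ n, 0 ≤ PowerSeries.coeff n (hser ρ ^ 2) := by
    rintro (_ | _ | n)
    · rw [e0]; norm_num
    · rw [zero_add, e1]; positivity
    · rw [e2]; positivity
  have hb := sqrt_bound h (fun n => PowerSeries.coeff n (hser ρ ^ 2)) (11 / 10) (by norm_num) hH0 hg (by
    intro N
    have hs := hasSum_hsq ρ hρ_root h0 (11 / 10) (by norm_num) (by linarith)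
    have := sum_le_hasSum (Finset.range (N + 1)) (fun n _ => mul_nonneg (gnn n) (by positivity)) hs
    rw [Finset.sum_range_succ', e0] at this
    have h2 : (1 + (ρ ^ 3 + ρ ^ 2) * (11 / 10) + ρ ^ 3 * (11 / 10) ^ 2) / (1 - ρ * (11 / 10)) ≤ 2 := by
      rw [div_le_iff₀ (by linarith)]
      nlinarith
    simp only [abs_of_nonneg (gnn _)]
    linarith)
  have hbk : ∀ k, |h k| * (11 / 10) ^ k ≤ 1 := by
    rintro (_ | k)
    · simp [hH0]
    · refine le_trans ?_ (hb (k + 1))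
      exact Finset.single_le_sum (f := fun k => |h (k + 1)| * (11 / 10 : ℝ) ^ (k + 1))
        (fun i _ => by positivity) (Finset.self_mem_range_succ k)
  have hb1 : ∀ N, ∑ k ∈ Finset.range N, |h (k + 1)| ≤ 1 := fun N => by
    refine le_trans (Finset.sum_le_sum fun k _ => ?_) (hb N)
    exact le_mul_of_one_le_right (abs_nonneg _) (one_le_pow₀ (by norm_num))
  have hsum1 : Summable fun k => |h (k + 1)| :=
    summable_of_sum_range_le (fun _ => abs_nonneg _) hb1
  have hsum : Summable fun k => ‖h k‖ := (summable_nat_add_iff 1).1 hsum1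
  have hnonneg : 0 ≤ ∑' k, h k := by
    rw [hsum.of_norm.tsum_eq_zero_add, hH0]
    have a1 : ∑' k, |h (k + 1)| ≤ 1 := hsum1.tsum_le_of_sum_range_le hb1
    have a2 : ‖∑' k, h (k + 1)‖ ≤ ∑' k, ‖h (k + 1)‖ := norm_tsum_le_tsum_norm hsum1
    have a3 := neg_abs_le (∑' k, h (k + 1))
    simp only [Real.norm_eq_abs] at a2
    linarith
  have hval : (∑' k, h k) = Real.sqrt (ρ * (3 * ρ ^ 2 + 2 * ρ + 3) / (1 - ρ)) := by
    have hs := hasSum_hsq ρ hρ_root h0 1 (by norm_num) (by linarith)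
    simp only [one_pow, mul_one] at hs
    have hm := tsum_mul_tsum_eq_tsum_sum_antidiagonal_of_summable_norm hsum hsum
    simp only [hg] at hm
    rw [hs.tsum_eq] at hm
    rw [← Real.sqrt_mul_self hnonneg, hm]
    congr 2
    linear_combination -hρ_root
  have T := transfer _ h _ (11 / 10) 1 (by norm_num) aser_asym hbk
  have T1 := (Filter.tendsto_add_atTop_iff_nat 1).2 T
  have hr : Filter.Tendsto (fun n : ℕ => ((n : ℝ) / ((n : ℝ) + 1)) ^ ((3 : ℝ) / 2)) Filter.atTop (nhds 1) := by
    have := (tendsto_natCast_div_add_atTop (1 : ℝ)).rpow_const (p := (3 : ℝ) / 2) (Or.inl one_ne_zero)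
    simpa using this
  have T2 := (T1.mul hr).const_mul (-(1 / (2 * ρ)))
  have hp : 0 < Real.sqrt Real.pi := by positivity
  have e : -(1 / (2 * ρ)) * ((∑' k, h k) * (-(1 / (2 * Real.sqrt Real.pi))) * 1) = C := by
    rw [hC, hval]
    field_simp
    norm_num
  rw [e] at T2
  refine T2.congr' ?_
  filter_upwards [Filter.eventually_gt_atTop 0] with n hn
  obtain ⟨m, rfl⟩ := Nat.exists_eq_succ_of_ne_zero hn.ne'
  have hs : ∑ k ∈ Finset.range (m.succ + 1 + 1), h k * PowerSeries.coeff (m.succ + 1 - k) aser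
      = -2 * K (m + 2) * ρ ^ (m + 2) := by
    rw [← coeff_sser, ← hser_mul, PowerSeries.coeff_mul,
      Finset.Nat.sum_antidiagonal_eq_sum_range_succ (fun i j => PowerSeries.coeff i (hser ρ) * PowerSeries.coeff j aser)]
  rw [hs, Real.div_rpow (by positivity) (by positivity)]
  push_cast
  have hq : (0 : ℝ) < ((m : ℝ) + 1 + 1) ^ ((3 : ℝ) / 2) := by positivity
  simp only [Nat.succ_eq_add_one]
  push_cast
  field_simp
  try ring
end
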